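/- Let p be a prime and let B be a blocking set in PG(2, p) that does not contain the full point set of any line. Then 2|B| ≥ 3(p + 1). -/

import Mathlib

open scoped LinearAlgebra.Projectivization

/-!
A minimal blocking set has a tangent line at each of its points. Send one tangent to infinity, so
that its point of contact is the direction of the vertical lines, and let `U` be the set of affine
points that remain, say `q + k` of them: `U` meets every nonvertical line and contains no vertical
line. The Rédei polynomial `∏ (s - x t + y)` over `(x, y) ∈ U` vanishes on all of `F_q ^ 2`, and so
by the combinatorial Nullstellensatz its top-degree part is lacunary: `h = ∏ (X - x)` has the form
`X ^ q * f + g` with `deg g ≤ deg f = k`. Every root of `h` is a root of `X * f + g`, and has in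
`h'` at most one multiplicity less than in `h`. As `h` splits, it divides `(X * f + g) * h'`, hence
also `(X * f + g) * (f * g' - f' * g)`, which has degree at most `3 * k - 1` unless it is zero, and
this gives `q + 1 ≤ 2 * k`.

The product is zero in two cases. If `X * f + g = 0`, then `U` meets the vertical lines too, and
Jamison's bound gives `|U| ≥ 2 * q - 1`. If the Wronskian of `f` and `g` is zero and `k` is less
than the characteristic, then `g` is a multiple `c * f`, so `h = (X + c) ^ q * f` and the vertical
line `x = -c` lies in `U`.
-/

section LacunaryPolynomials

open Polynomial

theorem eq_C_of_derivative_eq_zero_of_natDegree_lt {R : Type*} [CommRing R]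
    [NoZeroDivisors R] {p : ℕ} [CharP R p] {f : R[X]} (hf : derivative f = 0)
    (hfp : f.natDegree < p) : f = C (f.coeff 0) := by
  refine eq_C_of_natDegree_eq_zero (Nat.eq_zero_of_dvd_of_lt ?_ hfp)
  rw [← expand_contract p hf (by lia), natDegree_expand]
  exact dvd_mul_left _ _

theorem wronskian_mul_mul_left {R : Type*} [CommRing R] (d f g : R[X]) :
    wronskian (d * f) (d * g) = d ^ 2 * wronskian f g := by
  simp only [wronskian, derivative_mul]
  ring

variable {F : Type*} [Field F] {f g : F[X]}

theorem exists_eq_C_mul_of_wronskian_eq_zero {p : ℕ} [CharP F p] (hf : f ≠ 0)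
    (hfp : f.natDegree < p) (hgp : g.natDegree < p) (hW : wronskian f g = 0) :
    ∃ c, g = C c * f := by
  classical
  rcases eq_or_ne g 0 with rfl | hg
  · exact ⟨0, by simp⟩
  obtain ⟨a, ha⟩ := EuclideanDomain.gcd_dvd_left f g
  obtain ⟨b, hb⟩ := EuclideanDomain.gcd_dvd_right f g
  have hbezout := EuclideanDomain.gcd_eq_gcd_ab f g
  set d := EuclideanDomain.gcd f g
  have hd : d ≠ 0 := left_ne_zero_of_mul (ha ▸ hf)
  have hab : IsCoprime a b := by
    refine ⟨EuclideanDomain.gcdA f g, EuclideanDomain.gcdB f g, mul_left_cancel₀ hd ?_⟩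
    linear_combination -hbezout - EuclideanDomain.gcdA f g * ha - EuclideanDomain.gcdB f g * hb
  have hWab : wronskian a b = 0 := by
    rw [ha, hb, wronskian_mul_mul_left] at hW
    exact (mul_eq_zero.mp hW).resolve_left (pow_ne_zero 2 hd)
  obtain ⟨ha', hb'⟩ := hab.wronskian_eq_zero_iff.mp hWab
  obtain ⟨s, rfl⟩ : ∃ s, a = C s := ⟨_, eq_C_of_derivative_eq_zero_of_natDegree_lt ha'
    ((natDegree_le_of_dvd (Dvd.intro_left d ha.symm) hf).trans_lt hfp)⟩
  obtain ⟨t, rfl⟩ : ∃ t, b = C t := ⟨_, eq_C_of_derivative_eq_zero_of_natDegree_lt hb'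
    ((natDegree_le_of_dvd (Dvd.intro_left d hb.symm) hg).trans_lt hgp)⟩
  have hs : s ≠ 0 := C_ne_zero.mp (right_ne_zero_of_mul (ha ▸ hf))
  refine ⟨t / s, ?_⟩
  calc g = d * C (t / s * s) := by rw [div_mul_cancel₀ t hs, ← hb]
    _ = C (t / s) * f := by rw [C_mul, ha]; ring

theorem natDegree_wronskian_add_two_le (hgf : g.natDegree ≤ f.natDegree)
    (hW : wronskian f g ≠ 0) : (wronskian f g).natDegree + 2 ≤ 2 * f.natDegree := by
  have hf : f ≠ 0 := by
    rintro rfl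
    exact hW (wronskian_zero_left g)
  set c := g.coeff f.natDegree / f.leadingCoeff with hc
  set r := g - C c * f with hr
  have hWr : wronskian f g = wronskian f r := by
    simp only [hr, wronskian, derivative_sub, derivative_mul, derivative_C]
    ring
  rw [hWr] at hW ⊢
  have hr_ne : r ≠ 0 := by
    intro h
    exact hW (by rw [h, wronskian_zero_right])
  have hr_le : r.natDegree ≤ f.natDegree :=
    (natDegree_sub_le_of_le hgf (natDegree_C_mul_le c f)).trans_eq (max_self _)
  have hr_coeff : r.coeff f.natDegree = 0 := by
    rw [hr, coeff_sub, coeff_C_mul, coeff_natDegree, hc,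
      div_mul_cancel₀ _ (leadingCoeff_ne_zero.mpr hf), sub_self]
  have hr_lt : r.natDegree < f.natDegree := by
    refine hr_le.lt_of_ne fun h ↦ hr_ne ?_
    rw [← leadingCoeff_eq_zero, leadingCoeff, h, hr_coeff]
  have := natDegree_wronskian_lt_add hW
  lia

theorem dvd_mul_derivative_of_splits {h r : F[X]} (hh : h.Splits)
    (hr : ∀ x, h.IsRoot x → r.IsRoot x) : h ∣ r * derivative h := by
  classical
  by_cases hne : r * derivative h = 0
  · simp [hne]
  have hr0 := left_ne_zero_of_mul hne
  have hh0 : h ≠ 0 := by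
    rintro rfl
    simp at hne
  refine hh.dvd_of_roots_le_roots hh0 (Multiset.le_iff_count.mpr fun x ↦ ?_)
  simp only [count_roots]
  rw [rootMultiplicity_mul hne]
  by_cases hx : h.IsRoot x
  · have := rootMultiplicity_sub_one_le_derivative_rootMultiplicity_of_ne_zero h x
      (right_ne_zero_of_mul hne)
    have := (rootMultiplicity_pos hr0).mpr (hr x hx)
    lia
  · simp [rootMultiplicity_eq_zero hx]

variable [Fintype F]

theorem X_add_C_pow_card (c : F) : (X + C c) ^ Fintype.card F = X ^ Fintype.card F + C c := by
  rw [← FiniteField.expand_card]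
  simp

theorem wronskian_X_pow_card_mul_add (f g : F[X]) :
    wronskian f (X ^ Fintype.card F * f + g) = wronskian f g := by
  simp only [wronskian, derivative_add, derivative_mul, derivative_X_pow,
    FiniteField.cast_card_eq_zero, C_0]
  ring

theorem X_pow_card_mul_add_dvd_mul_wronskian (h : (X ^ Fintype.card F * f + g).Splits) :
    X ^ Fintype.card F * f + g ∣ (X * f + g) * wronskian f g := by
  have hroot (x : F) (hx : (X ^ Fintype.card F * f + g).IsRoot x) : (X * f + g).IsRoot x := by
    simpa [FiniteField.pow_card] using hx
  rw [← wronskian_X_pow_card_mul_add, wronskian, mul_sub, mul_left_comm]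
  exact dvd_sub ((dvd_mul_derivative_of_splits h hroot).mul_left f)
    (by rw [← mul_assoc]; exact dvd_mul_left _ _)

theorem card_lt_two_mul_natDegree_or_of_splits (p : ℕ) [CharP F p] (hf : f ≠ 0)
    (hgf : g.natDegree ≤ f.natDegree) (hfp : f.natDegree < p)
    (h : (X ^ Fintype.card F * f + g).Splits) :
    Fintype.card F < 2 * f.natDegree ∨ X * f + g = 0 ∨ ∃ c, g = C c * f := by
  by_cases hXfg : X * f + g = 0
  · exact .inr (.inl hXfg)
  by_cases hW : wronskian f g = 0
  · exact .inr (.inr (exists_eq_C_mul_of_wronskian_eq_zero hf hfp (hgf.trans_lt hfp) hW))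
  have hle := natDegree_le_of_dvd (X_pow_card_mul_add_dvd_mul_wronskian h) (mul_ne_zero hXfg hW)
  have hlt : g.natDegree < (X ^ Fintype.card F * f).natDegree := by
    rw [natDegree_X_pow_mul _ hf]
    have := Fintype.card_pos (α := F)
    lia
  rw [natDegree_mul hXfg hW, natDegree_add_eq_left_of_natDegree_lt hlt,
    natDegree_X_pow_mul _ hf] at hle
  have hXfg_le : (X * f + g).natDegree ≤ f.natDegree + 1 :=
    natDegree_add_le_of_degree_le (natDegree_X_mul hf).le (by lia)
  have := natDegree_wronskian_add_two_le hgf hW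
  lia

end LacunaryPolynomials

section AffineLinearProducts

open MvPolynomial

variable {R σ ι : Type*} [CommSemiring R] {s : Finset ι} {ℓ : ι → MvPolynomial σ R}

theorem totalDegree_prod_add_C_le (hℓ : ∀ i ∈ s, (ℓ i).IsHomogeneous 1) (c : ι → R) :
    (∏ i ∈ s, (ℓ i + C (c i))).totalDegree ≤ s.card := by
  refine (totalDegree_finsetProd _ _).trans ?_
  rw [Finset.card_eq_sum_ones]
  refine Finset.sum_le_sum fun i hi ↦ (totalDegree_add _ _).trans ?_
  exact max_le (hℓ i hi).totalDegree_le ((totalDegree_C (c i)).trans_le zero_le_one)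

theorem coeff_prod_add_C (hℓ : ∀ i ∈ s, (ℓ i).IsHomogeneous 1) (c : ι → R)
    {m : σ →₀ ℕ} (hm : m.degree = s.card) :
    coeff m (∏ i ∈ s, (ℓ i + C (c i))) = coeff m (∏ i ∈ s, ℓ i) := by
  classical
  rw [Finset.prod_add, coeff_sum, Finset.sum_eq_single_of_mem s (Finset.mem_powerset_self s)]
  · simp
  intro t ht hne
  have hts := Finset.mem_powerset.mp ht
  have hhom := IsHomogeneous.prod t ℓ (fun _ ↦ 1) fun i hi ↦ hℓ i (hts hi)
  have hcard := Finset.card_lt_card (hts.ssubset_of_ne hne)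
  rw [← map_prod, mul_comm, coeff_C_mul, hhom.coeff_eq_zero, mul_zero]
  rw [hm, ← Finset.card_eq_sum_ones]
  exact hcard.ne'

/-- The theorem of Jamison and of Brouwer and Schrijver. A product of affine forms, one for each
point of `S` but one, vanishes exactly off the origin, so that its values do not sum to zero, which
they would if its degree were less than `n * (q - 1)`. -/
theorem card_mul_card_sub_one_lt_card_of_meets_hyperplanes {F ι : Type*} [Field F]
    [Fintype F] [Fintype ι] [Nonempty ι] {S : Finset (ι → F)}
    (hS : ∀ a : ι → F, a ≠ 0 → ∀ c, ∃ v ∈ S, v ⬝ᵥ a = c) :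
    Fintype.card ι * (Fintype.card F - 1) < S.card := by
  classical
  obtain ⟨v₀, hv₀, -⟩ := hS 1 one_ne_zero 0
  let f : MvPolynomial ι F := ∏ v ∈ S.erase v₀, (∑ i, C (v i - v₀ i) * X i + C 1)
  have hf_zero : eval 0 f = 1 := by simp [f]
  have hf_ne_zero (a : ι → F) (ha : a ≠ 0) : eval a f = 0 := by
    obtain ⟨v, hv, hav⟩ := hS a ha (v₀ ⬝ᵥ a - 1)
    have hne : v ≠ v₀ := by
      rintro rfl
      exact one_ne_zero (sub_eq_self.mp hav.symm)
    have heval : ∑ i, (v i - v₀ i) * a i + 1 = 0 := by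
      change (v - v₀) ⬝ᵥ a + 1 = 0
      rw [sub_dotProduct, hav]
      ring
    rw [map_prod]
    exact Finset.prod_eq_zero (Finset.mem_erase.mpr ⟨hne, hv⟩) (by simpa using heval)
  have hf_degree : f.totalDegree ≤ S.card - 1 := by
    rw [← Finset.card_erase_of_mem hv₀]
    exact totalDegree_prod_add_C_le
      (fun v _ ↦ IsHomogeneous.sum _ _ _ fun i _ ↦ isHomogeneous_C_mul_X _ i) _
  by_contra! hlt
  have hcard := Finset.card_pos.mpr ⟨v₀, hv₀⟩
  have hsum := sum_eval_eq_zero f (by rw [mul_comm]; lia)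
  rw [Fintype.sum_eq_single 0 hf_ne_zero, hf_zero] at hsum
  exact one_ne_zero hsum

end AffineLinearProducts

section VerticalLines

variable {F : Type*}

/-- A set of points `(x, y)` of the affine plane containing no line `x = const`. -/
def ContainsNoVerticalLine (U : Finset (F × F)) : Prop :=
  ∀ x : F, ∃ y, (x, y) ∉ U

variable [Fintype F] {U : Finset (F × F)}

theorem ContainsNoVerticalLine.card_filter_lt [DecidableEq F]
    (hU : ContainsNoVerticalLine U) (x : F) :
    (U.filter fun u ↦ u.1 = x).card < Fintype.card F := by
  obtain ⟨y, hy⟩ := hU x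
  have hss : U.filter (fun u ↦ u.1 = x) ⊂ {x} ×ˢ Finset.univ := by
    refine (Finset.ssubset_iff_of_subset fun u hu ↦ ?_).mpr ⟨(x, y), by simp, by simp [hy]⟩
    rw [← (Finset.mem_filter.mp hu).2]
    exact Finset.mk_mem_product (Finset.mem_singleton_self _) (Finset.mem_univ _)
  simpa using Finset.card_lt_card hss

theorem ContainsNoVerticalLine.card_le (hU : ContainsNoVerticalLine U) :
    U.card ≤ (Fintype.card F - 1) * Fintype.card F := by
  classical
  exact Finset.card_le_mul_card_image_of_maps_to (f := Prod.fst) (t := Finset.univ)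
    (fun _ _ ↦ Finset.mem_univ _) _ fun x _ ↦ Nat.le_sub_one_of_lt (hU.card_filter_lt x)

end VerticalLines

section AffinePlane

open Polynomial

variable {F : Type*} [Field F] {U : Finset (F × F)}

/-- A set of points of the affine plane meeting every line `y = m x + c`. -/
def MeetsNonverticalLines (U : Finset (F × F)) : Prop :=
  ∀ m c : F, ∃ u ∈ U, u.2 = m * u.1 + c

/-- The product of `X - x` over the points `(x, y)` of `U`; the multiplicity of a root `x` is the
number of points of `U` on the vertical line through `(x, 0)`. -/
noncomputable def abscissaPolynomial (U : Finset (F × F)) : F[X] :=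
  ∏ u ∈ U, (X - C u.1)

/-- The Rédei polynomial of `U`: its value at `(s, t)` is zero if and only if `U` meets the line
`y = t x - s`. Its top-degree part is the homogenization of `abscissaPolynomial U`. -/
noncomputable def redeiPolynomial (U : Finset (F × F)) : MvPolynomial (Fin 2) F :=
  ∏ u ∈ U, (.X 0 - .C u.1 * .X 1 + .C u.2)

theorem monic_abscissaPolynomial (U : Finset (F × F)) : (abscissaPolynomial U).Monic :=
  monic_prod_X_sub_C _ _

theorem natDegree_abscissaPolynomial (U : Finset (F × F)) :
    (abscissaPolynomial U).natDegree = U.card :=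
  natDegree_finsetProd_X_sub_C_eq_card U Prod.fst

theorem splits_abscissaPolynomial (U : Finset (F × F)) : (abscissaPolynomial U).Splits :=
  Splits.prod fun _ _ ↦ Splits.X_sub_C _

theorem roots_abscissaPolynomial (U : Finset (F × F)) :
    (abscissaPolynomial U).roots = U.val.map Prod.fst := by
  simpa [abscissaPolynomial] using roots_multiset_prod_X_sub_C (U.val.map Prod.fst)

theorem isRoot_abscissaPolynomial_iff {x : F} :
    (abscissaPolynomial U).IsRoot x ↔ ∃ u ∈ U, u.1 = x := by
  rw [← mem_roots (monic_abscissaPolynomial U).ne_zero, roots_abscissaPolynomial,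
    Multiset.mem_map]
  rfl

theorem rootMultiplicity_abscissaPolynomial [DecidableEq F] (U : Finset (F × F)) (x : F) :
    (abscissaPolynomial U).rootMultiplicity x = (U.filter fun u ↦ u.1 = x).card := by
  rw [← count_roots, roots_abscissaPolynomial, Multiset.count_map]
  simp only [Finset.card, Finset.filter_val, eq_comm]

theorem isHomogeneous_X_sub_C_mul_X {R : Type*} [CommRing R] (a : R) :
    (.X 0 - .C a * .X 1 : MvPolynomial (Fin 2) R).IsHomogeneous 1 :=
  (MvPolynomial.isHomogeneous_X R 0).sub (MvPolynomial.isHomogeneous_C_mul_X a 1)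

theorem homogenize_abscissaPolynomial (U : Finset (F × F)) :
    (abscissaPolynomial U).homogenize U.card = ∏ u ∈ U, (.X 0 - .C u.1 * .X 1) := by
  have h := homogenize_finsetProd (s := U) (p := fun u ↦ X - C u.1) (n := fun _ ↦ 1)
    fun u _ ↦ (natDegree_X_sub_C u.1).le
  simpa [abscissaPolynomial] using h

theorem coeff_redeiPolynomial (U : Finset (F × F)) {m : Fin 2 →₀ ℕ} (hm : m.degree = U.card) :
    (redeiPolynomial U).coeff m = (abscissaPolynomial U).coeff (m 0) := by
  rw [redeiPolynomial, coeff_prod_add_C (fun u _ ↦ isHomogeneous_X_sub_C_mul_X u.1) _ hm,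
    ← homogenize_abscissaPolynomial, coeff_homogenize, if_pos]
  rw [← hm, Finsupp.degree_eq_sum, Fin.sum_univ_two]

theorem MeetsNonverticalLines.eval_redeiPolynomial (hU : MeetsNonverticalLines U) (z : Fin 2 → F) :
    MvPolynomial.eval z (redeiPolynomial U) = 0 := by
  obtain ⟨u, hu, h⟩ := hU (z 1) (-z 0)
  rw [redeiPolynomial, map_prod]
  refine Finset.prod_eq_zero hu ?_
  simp only [map_add, map_sub, map_mul, MvPolynomial.eval_X, MvPolynomial.eval_C]
  linear_combination h

variable [Fintype F]

theorem MeetsNonverticalLines.coeff_abscissaPolynomial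
    (hU : MeetsNonverticalLines U) {i : ℕ} (hi : i < Fintype.card F)
    (hUi : U.card < Fintype.card F + i) : (abscissaPolynomial U).coeff i = 0 := by
  by_contra hne
  have hiU : i ≤ U.card := natDegree_abscissaPolynomial U ▸ le_natDegree_of_ne_zero hne
  let m : Fin 2 →₀ ℕ := Finsupp.equivFunOnFinite.symm ![i, U.card - i]
  have hm : m.degree = U.card := by
    rw [Finsupp.degree_eq_sum, Fin.sum_univ_two]
    exact Nat.add_sub_of_le hiU
  have hcoeff : (redeiPolynomial U).coeff m ≠ 0 := by rwa [coeff_redeiPolynomial U hm]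
  have hdegree : (redeiPolynomial U).totalDegree = m.degree := by
    refine le_antisymm ?_ (MvPolynomial.le_totalDegree (MvPolynomial.mem_support_iff.mpr hcoeff))
    exact hm ▸ totalDegree_prod_add_C_le (fun u _ ↦ isHomogeneous_X_sub_C_mul_X u.1) _
  obtain ⟨z, -, hz⟩ := MvPolynomial.combinatorial_nullstellensatz_exists_eval_nonzero _ m
    hcoeff hdegree (fun _ ↦ Finset.univ) (by
      have : U.card - i < Fintype.card F := by lia
      simp [Fin.forall_fin_two, m, hi, this])
  exact hz (hU.eval_redeiPolynomial z)

theorem MeetsNonverticalLines.card_le (hU : MeetsNonverticalLines U) :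
    Fintype.card F ≤ U.card := by
  by_contra! hlt
  have := hU.coeff_abscissaPolynomial hlt (by lia)
  rw [← natDegree_abscissaPolynomial, (monic_abscissaPolynomial U).coeff_natDegree] at this
  exact one_ne_zero this

theorem MeetsNonverticalLines.two_mul_card_sub_one_lt_card
    (hU : MeetsNonverticalLines U) (hvert : ∀ x, ∃ u ∈ U, u.1 = x) :
    2 * (Fintype.card F - 1) < U.card := by
  have hlines (a : Fin 2 → F) (ha : a ≠ 0) (c : F) :
      ∃ v ∈ U.map (finTwoArrowEquiv F).symm.toEmbedding, v ⬝ᵥ a = c := by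
    suffices ∃ u ∈ U, u.1 * a 0 + u.2 * a 1 = c by
      obtain ⟨u, hu, h⟩ := this
      exact ⟨_, Finset.mem_map_of_mem _ hu, by simpa [dotProduct] using h⟩
    by_cases ha₁ : a 1 = 0
    · have ha₀ : a 0 ≠ 0 := by
        intro ha₀
        exact ha (funext (Fin.forall_fin_two.mpr ⟨ha₀, ha₁⟩))
      obtain ⟨u, hu, h⟩ := hvert (c / a 0)
      exact ⟨u, hu, by rw [h, ha₁]; field_simp; ring⟩
    · obtain ⟨u, hu, h⟩ := hU (-a 0 / a 1) (c / a 1)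
      exact ⟨u, hu, by rw [h]; field_simp; ring⟩
  simpa using card_mul_card_sub_one_lt_card_of_meets_hyperplanes hlines

theorem MeetsNonverticalLines.exists_abscissaPolynomial_eq (hU : MeetsNonverticalLines U) :
    ∃ f g : F[X], abscissaPolynomial U = X ^ Fintype.card F * f + g ∧ f ≠ 0 ∧
      Fintype.card F + f.natDegree = U.card ∧ g.natDegree ≤ f.natDegree := by
  set h := abscissaPolynomial U
  set q := Fintype.card F
  have hmonic : (X ^ q : F[X]).Monic := monic_X_pow q
  have hdeg : (h /ₘ X ^ q).natDegree = U.card - q := by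
    rw [natDegree_divByMonic _ hmonic, natDegree_abscissaPolynomial, natDegree_X_pow]
  refine ⟨h /ₘ X ^ q, h %ₘ X ^ q, ?_, ?_, ?_, ?_⟩
  · rw [add_comm, modByMonic_add_div]
  · rw [Ne, divByMonic_eq_zero_iff hmonic, not_lt]
    refine (degree_X_pow_le q).trans ?_
    rw [degree_eq_natDegree (monic_abscissaPolynomial U).ne_zero, natDegree_abscissaPolynomial]
    exact_mod_cast hU.card_le
  · rw [hdeg, Nat.add_sub_of_le hU.card_le]
  · rw [hdeg, natDegree_le_iff_coeff_eq_zero]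
    intro i hi
    rcases lt_or_ge i q with hiq | hiq
    · calc (h %ₘ X ^ q).coeff i = (h %ₘ X ^ q + X ^ q * (h /ₘ X ^ q)).coeff i := by
            rw [coeff_add, coeff_X_pow_mul', if_neg hiq.not_ge, add_zero]
        _ = 0 := by rw [modByMonic_add_div, hU.coeff_abscissaPolynomial hiq (by lia)]
    · refine coeff_eq_zero_of_degree_lt ((degree_modByMonic_lt h hmonic).trans_le ?_)
      rw [degree_X_pow]
      exact_mod_cast hiq

theorem MeetsNonverticalLines.three_mul_card_lt_of_X_mul_add_eq_zero
    (hU : MeetsNonverticalLines U) (hU' : ContainsNoVerticalLine U) {f g : F[X]}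
    (hfg : abscissaPolynomial U = X ^ Fintype.card F * f + g) (h : X * f + g = 0) :
    3 * Fintype.card F < 2 * U.card := by
  have hvert (x : F) : ∃ u ∈ U, u.1 = x := by
    rw [← isRoot_abscissaPolynomial_iff, IsRoot, hfg]
    simpa [FiniteField.pow_card] using congrArg (eval x) h
  have hlower := hU.two_mul_card_sub_one_lt_card hvert
  have hupper := hU'.card_le
  have hq : 3 ≤ Fintype.card F := by
    by_contra! hlt
    interval_cases Fintype.card F <;> lia
  lia

theorem ContainsNoVerticalLine.ne_C_mul (hU : ContainsNoVerticalLine U)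
    {f g : F[X]} (hfg : abscissaPolynomial U = X ^ Fintype.card F * f + g) (c : F) :
    g ≠ C c * f := by
  classical
  rintro rfl
  have hdvd : (X - C (-c)) ^ Fintype.card F ∣ abscissaPolynomial U := by
    refine ⟨f, ?_⟩
    rw [hfg, C_neg, sub_neg_eq_add, X_add_C_pow_card, add_mul]
  have hle := (le_rootMultiplicity_iff (monic_abscissaPolynomial U).ne_zero).mpr hdvd
  rw [rootMultiplicity_abscissaPolynomial] at hle
  exact (hU.card_filter_lt (-c)).not_ge hle

theorem MeetsNonverticalLines.card_add_le_card_or (p : ℕ) [CharP F p]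
    (hU : MeetsNonverticalLines U) (hU' : ContainsNoVerticalLine U) :
    Fintype.card F + p ≤ U.card ∨ 3 * Fintype.card F < 2 * U.card := by
  obtain ⟨f, g, hfg, hf, hcard, hgf⟩ := hU.exists_abscissaPolynomial_eq
  rcases le_or_gt p f.natDegree with hfp | hfp
  · exact .inl (by lia)
  right
  have hsplits := hfg ▸ splits_abscissaPolynomial U
  rcases card_lt_two_mul_natDegree_or_of_splits p hf hgf hfp hsplits with hlt | hzero | ⟨c, hc⟩
  · lia
  · exact hU.three_mul_card_lt_of_X_mul_add_eq_zero hU' hfg hzero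
  · exact absurd hc (hU'.ne_C_mul hfg c)

end AffinePlane

section BlockingSets

open Module Projectivization

variable {K V : Type*} [Field K] [AddCommGroup V] [Module K V] {B B' : Set (ℙ K V)} {P : ℙ K V}
  {W : Submodule K V}

theorem coord_ne_zero {ι R M : Type*} [CommSemiring R] [Nontrivial R] [AddCommMonoid M]
    [Module R M] (b : Basis ι R M) (i : ι) : b.coord i ≠ 0 := by
  intro h
  simpa using LinearMap.congr_fun h (b i)

theorem finrank_ker_eq_two {φ : Dual K V} (hV : finrank K V = 3) (hφ : φ ≠ 0) :
    finrank K (LinearMap.ker φ) = 2 := by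
  have : FiniteDimensional K V := .of_finrank_pos (by lia)
  have := Dual.finrank_ker_add_one_of_ne_zero hφ
  lia

/-- A set of points of a projective space is blocking if it meets every line. -/
def IsBlockingSet (B : Set (ℙ K V)) : Prop :=
  ∀ W : Submodule K V, finrank K W = 2 → ∃ x ∈ B, x.submodule ≤ W

/-- A set of points of a projective space containing all the points of no line. -/
def ContainsNoLine (B : Set (ℙ K V)) : Prop :=
  ∀ W : Submodule K V, finrank K W = 2 → ¬ {x : ℙ K V | x.submodule ≤ W} ⊆ B

theorem ContainsNoLine.mono (hB : ContainsNoLine B) (h : B' ⊆ B) : ContainsNoLine B' :=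
  fun W hW hWB' ↦ hB W hW (hWB'.trans h)

theorem IsBlockingSet.exists_minimal_subset [Finite (ℙ K V)] (hB : IsBlockingSet B) :
    ∃ B' ⊆ B, Minimal IsBlockingSet B' :=
  Finite.exists_le_minimal hB

theorem exists_tangent_line_of_minimal (hB : Minimal IsBlockingSet B) (hP : P ∈ B) :
    ∃ W : Submodule K V, finrank K W = 2 ∧ P.submodule ≤ W ∧
      ∀ x ∈ B, x.submodule ≤ W → x = P := by
  have hnot : ¬ IsBlockingSet (B \ {P}) := fun h ↦ (hB.le_of_le h Set.sdiff_subset hP).2 rfl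
  simp only [IsBlockingSet, not_forall, not_exists, not_and] at hnot
  obtain ⟨W, hW, hmiss⟩ := hnot
  have huniq (x : ℙ K V) (hx : x ∈ B) (hxW : x.submodule ≤ W) : x = P := by
    by_contra hne
    exact hmiss x ⟨hx, hne⟩ hxW
  obtain ⟨x, hx, hxW⟩ := hB.prop W hW
  exact ⟨W, hW, huniq x hx hxW ▸ hxW, huniq⟩

theorem IsBlockingSet.nonempty (hV : finrank K V = 3) (hB : IsBlockingSet B) : B.Nonempty := by
  have : FiniteDimensional K V := .of_finrank_pos (by lia)
  have b := finBasisOfFinrankEq K V hV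
  obtain ⟨P, hP, -⟩ := hB _ (finrank_ker_eq_two hV (coord_ne_zero b 0))
  exact ⟨P, hP⟩

theorem submodule_mk_le_iff {v : V} (hv : v ≠ 0) :
    (mk K v hv).submodule ≤ W ↔ v ∈ W := by
  rw [submodule_mk, Submodule.span_singleton_le_iff_mem]

theorem exists_basis_ker_coord_eq (hV : finrank K V = 3) (hW : finrank K W = 2)
    (hP : P.submodule ≤ W) :
    ∃ b : Basis (Fin 3) K V, LinearMap.ker (b.coord 0) = W ∧ mk K (b 2) (b.ne_zero 2) = P := by
  have : FiniteDimensional K V := .of_finrank_pos (by lia)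
  obtain ⟨v₀, -, hv₀⟩ := SetLike.exists_of_lt (lt_top_iff_ne_top.mpr (show W ≠ ⊤ by
    rintro rfl
    rw [finrank_top] at hW
    lia))
  obtain ⟨v₁, hv₁, hv₁P⟩ := SetLike.exists_of_lt (hP.lt_of_ne (by
    rintro rfl
    rw [finrank_submodule] at hW
    lia))
  rw [submodule_eq] at hP hv₁P
  have hv₂ : P.rep ∈ W := (Submodule.span_singleton_le_iff_mem _ _).mp hP
  have hli : LinearIndependent K ![v₀, v₁, P.rep] := by
    refine linearIndependent_finCons.mpr ⟨?_, fun h ↦ hv₀ (Submodule.span_le.mpr ?_ h)⟩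
    · refine linearIndependent_finCons.mpr ⟨?_, by simpa using hv₁P⟩
      exact LinearIndependent.of_subsingleton 0 P.rep_nonzero
    · simp [Set.insert_subset_iff, hv₁, hv₂]
  have hcard : Fintype.card (Fin 3) = finrank K V := by rw [hV, Fintype.card_fin]
  let b := basisOfLinearIndependentOfCardEqFinrank hli hcard
  have hb : ⇑b = ![v₀, v₁, P.rep] := coe_basisOfLinearIndependentOfCardEqFinrank hli hcard
  refine ⟨b, Submodule.eq_of_le_of_finrank_eq (fun v hv ↦ ?_) ?_, ?_⟩
  · have hv' : b.repr v 0 = 0 := hv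
    rw [← b.sum_repr v, Fin.sum_univ_three, hv', zero_smul, zero_add, hb]
    exact W.add_mem (W.smul_mem _ hv₁) (W.smul_mem _ hv₂)
  · rw [hW, finrank_ker_eq_two hV (coord_ne_zero b 0)]
  · simp only [hb]
    exact P.mk_rep

end BlockingSets

section AffineChart

open Module Projectivization

variable {K V : Type*} [Field K] [AddCommGroup V] [Module K V] (b : Basis (Fin 3) K V)
  {B : Set (ℙ K V)}

theorem affineVector_ne_zero (u : K × K) : b 0 + u.1 • b 1 + u.2 • b 2 ≠ 0 := by
  intro h
  simpa using congrArg (b.coord 0) h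

/-- The point with homogeneous coordinates `(1 : x : y)`. -/
noncomputable def affinePoint (u : K × K) : ℙ K V :=
  mk K (b 0 + u.1 • b 1 + u.2 • b 2) (affineVector_ne_zero b u)

variable {b}

theorem affinePoint_submodule_le_ker_iff {φ : Dual K V} {u : K × K} :
    (affinePoint b u).submodule ≤ LinearMap.ker φ ↔
      φ (b 0) + u.1 * φ (b 1) + u.2 * φ (b 2) = 0 := by
  simp [affinePoint]

theorem affinePoint_injective : Function.Injective (affinePoint b) := by
  intro u u' h
  obtain ⟨a, ha⟩ := (mk_eq_mk_iff' K _ _ _ _).mp h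
  have h₀ : a = 1 := by simpa using congrArg (b.coord 0) ha
  have h₁ : u'.1 = u.1 := by simpa [h₀] using congrArg (b.coord 1) ha
  have h₂ : u'.2 = u.2 := by simpa [h₀] using congrArg (b.coord 2) ha
  exact Prod.ext h₁.symm h₂.symm

theorem affinePoint_ne (u : K × K) : affinePoint b u ≠ mk K (b 2) (b.ne_zero 2) := by
  intro h
  have : (affinePoint b u).submodule ≤ LinearMap.ker (b.coord 0) := by
    rw [h, submodule_mk_le_iff]
    simp
  simp [affinePoint_submodule_le_ker_iff] at this

theorem exists_affinePoint_eq {x : ℙ K V} (hx : ¬ x.submodule ≤ LinearMap.ker (b.coord 0)) :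
    ∃ u, affinePoint b u = x := by
  induction x using Projectivization.ind with | _ v hv
  rw [submodule_mk_le_iff, LinearMap.mem_ker, b.coord_apply] at hx
  refine ⟨(b.repr v 1 / b.repr v 0, b.repr v 2 / b.repr v 0),
    (mk_eq_mk_iff' K _ _ _ _).mpr ⟨(b.repr v 0)⁻¹, ?_⟩⟩
  nth_rw 2 [← b.sum_repr v]
  simp only [Fin.sum_univ_three, smul_add, smul_smul, inv_mul_cancel₀ hx, one_smul,
    div_eq_inv_mul]

theorem eq_mk_basis_two_of_le_ker {x : ℙ K V} (hx₀ : x.submodule ≤ LinearMap.ker (b.coord 0))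
    (hx₁ : x.submodule ≤ LinearMap.ker (b.coord 1)) : x = mk K (b 2) (b.ne_zero 2) := by
  induction x using Projectivization.ind with | _ v hv
  rw [submodule_mk_le_iff, LinearMap.mem_ker, b.coord_apply] at hx₀ hx₁
  refine (mk_eq_mk_iff' K _ _ _ _).mpr ⟨b.repr v 2, ?_⟩
  calc b.repr v 2 • b 2 = ∑ i, b.repr v i • b i := by
        rw [Fin.sum_univ_three, hx₀, hx₁, zero_smul, zero_smul, zero_add, zero_add]
    _ = v := b.sum_repr v

variable [Fintype K]

open Classical in
variable (b B) in
/-- The affine coordinates of the points of `B` off the line `ker (b.coord 0)`. -/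
noncomputable def affinePart : Finset (K × K) := {u | affinePoint b u ∈ B}

theorem mem_affinePart {u : K × K} : u ∈ affinePart b B ↔ affinePoint b u ∈ B := by
  simp [affinePart]

theorem card_affinePart_lt (hB : mk K (b 2) (b.ne_zero 2) ∈ B) (hfin : B.Finite) :
    (affinePart b B).card < B.ncard := by
  calc (affinePart b B).card
      = (affinePoint b '' affinePart b B).ncard := by
        rw [Set.ncard_image_of_injective _ affinePoint_injective, Set.ncard_coe_finset]
    _ < B.ncard := by
      refine Set.ncard_lt_ncard ⟨Set.image_subset_iff.mpr fun u hu ↦ mem_affinePart.mp hu,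
        fun h ↦ ?_⟩ hfin
      obtain ⟨u, -, hu⟩ := h hB
      exact affinePoint_ne u hu

theorem IsBlockingSet.meetsNonverticalLines_affinePart (hB : IsBlockingSet B)
    (htangent : ∀ x ∈ B, x.submodule ≤ LinearMap.ker (b.coord 0) →
      x = mk K (b 2) (b.ne_zero 2)) :
    MeetsNonverticalLines (affinePart b B) := by
  intro m c
  have hV : finrank K V = 3 := by rw [finrank_eq_card_basis b, Fintype.card_fin]
  let φ : Dual K V := c • b.coord 0 + m • b.coord 1 - b.coord 2
  have hφ₀ : φ (b 0) = c := by simp [φ]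
  have hφ₁ : φ (b 1) = m := by simp [φ]
  have hφ₂ : φ (b 2) = -1 := by simp [φ]
  have hφ : φ ≠ 0 := by
    intro h
    simp [h] at hφ₂
  obtain ⟨x, hx, hxφ⟩ := hB _ (finrank_ker_eq_two hV hφ)
  obtain ⟨u, rfl⟩ : ∃ u, affinePoint b u = x := by
    refine exists_affinePoint_eq fun hx₀ ↦ ?_
    rw [htangent x hx hx₀, submodule_mk_le_iff, LinearMap.mem_ker, hφ₂] at hxφ
    exact neg_ne_zero.mpr one_ne_zero hxφ
  rw [affinePoint_submodule_le_ker_iff, hφ₀, hφ₁, hφ₂] at hxφ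
  exact ⟨u, mem_affinePart.mpr hx, by linear_combination -hxφ⟩

theorem ContainsNoLine.containsNoVerticalLine_affinePart (hB : ContainsNoLine B)
    (hb : mk K (b 2) (b.ne_zero 2) ∈ B) : ContainsNoVerticalLine (affinePart b B) := by
  intro x
  have hV : finrank K V = 3 := by rw [finrank_eq_card_basis b, Fintype.card_fin]
  let φ : Dual K V := b.coord 1 - x • b.coord 0
  have hφ₀ : φ (b 0) = -x := by simp [φ]
  have hφ₁ : φ (b 1) = 1 := by simp [φ]
  have hφ₂ : φ (b 2) = 0 := by simp [φ]
  have hφ : φ ≠ 0 := by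
    intro h
    simp [h] at hφ₁
  obtain ⟨z, hzφ, hzB⟩ := Set.not_subset.mp (hB _ (finrank_ker_eq_two hV hφ))
  rw [Set.mem_ofPred_eq] at hzφ
  obtain ⟨u, rfl⟩ : ∃ u, affinePoint b u = z := by
    refine exists_affinePoint_eq fun hz₀ ↦ hzB ?_
    have hz₁ : z.submodule ≤ LinearMap.ker (b.coord 1) := by
      intro v hv
      simpa [φ, LinearMap.mem_ker.mp (hz₀ hv)] using hzφ hv
    rwa [eq_mk_basis_two_of_le_ker hz₀ hz₁]
  rw [affinePoint_submodule_le_ker_iff, hφ₀, hφ₁, hφ₂] at hzφ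
  obtain rfl : u.1 = x := by linear_combination hzφ
  exact ⟨u.2, fun h ↦ hzB (mem_affinePart.mp h)⟩

end AffineChart

theorem statement13_general {K V : Type*} [Field K] [Fintype K] (p : ℕ) [CharP K p]
    [AddCommGroup V] [Module K V] (hV : Module.finrank K V = 3) {B : Set (ℙ K V)}
    (hB : IsBlockingSet B) (hline : ContainsNoLine B) :
    Fintype.card K + p + 1 ≤ B.ncard ∨ 3 * (Fintype.card K + 1) ≤ 2 * B.ncard := by
  have : FiniteDimensional K V := .of_finrank_pos (by lia)
  have : Finite V := Module.finite_of_finite K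
  obtain ⟨B', hB'B, hmin⟩ := hB.exists_minimal_subset
  obtain ⟨P, hP⟩ := hmin.prop.nonempty hV
  obtain ⟨W, hW, hPW, htangent⟩ := exists_tangent_line_of_minimal hmin hP
  obtain ⟨b, rfl, rfl⟩ := exists_basis_ker_coord_eq hV hW hPW
  have hcard := (card_affinePart_lt hP B'.toFinite).trans_le (Set.ncard_le_ncard hB'B)
  have := (hmin.prop.meetsNonverticalLines_affinePart htangent).card_add_le_card_or p
    ((hline.mono hB'B).containsNoVerticalLine_affinePart hP)
  lia

/-- (Blokhuis) Let `p` be a prime and let `B` be a blocking set in `PG(2, p)` (points are the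
1-dimensional subspaces of `F_p^3`, lines are the 2-dimensional subspaces) that does not contain
the full point set of any line. Then `2 * |B| ≥ 3 * (p + 1)`. -/
theorem statement13 (p : ℕ) [Fact p.Prime]
    (B : Set (ℙ (ZMod p) (Fin 3 → ZMod p)))
    (hblock : ∀ W : Submodule (ZMod p) (Fin 3 → ZMod p), Module.finrank (ZMod p) W = 2 →
      ∃ x ∈ B, x.submodule ≤ W)
    (hline : ∀ W : Submodule (ZMod p) (Fin 3 → ZMod p), Module.finrank (ZMod p) W = 2 →
      ¬ {x : ℙ (ZMod p) (Fin 3 → ZMod p) | x.submodule ≤ W} ⊆ B) :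
    3 * (p + 1) ≤ 2 * B.ncard := by
  have hp := (Fact.out : p.Prime).pos
  have := statement13_general p (by simp) hblock hline
  rw [ZMod.card] at this
  lia
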